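/- Let G be a finitely generated virtually free group with generating set {s₁,…,sₙ}. There exists a universal first-order formula θ(x₁,…,xₙ) in the language of groups with n free variables such that for every group endomorphism φ of G, the sentence θ(φ(s₁),…,φ(sₙ)) is satisfied by G if and only if φ is class-permuting. -/

import Mathlib

open FirstOrder Language

/-- Function symbols of the first-order language of groups:
a binary multiplication, a unary inverse and a constant for the identity. -/
inductive GroupFunc : ℕ → Type
  | mul : GroupFunc 2
  | inv : GroupFunc 1
  | one : GroupFunc 0

/-- The first-order language of groups. -/
def groupLang : FirstOrder.Language :=
  { Functions := GroupFunc
    Relations := fun _ => Empty }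

/-- Every group is a structure for the language of groups in the natural way. -/
instance groupLangStructure (G : Type*) [Group G] : groupLang.Structure G where
  funMap {n} f v :=
    match f with
    | .mul => v 0 * v 1
    | .inv => (v 0)⁻¹
    | .one => 1
  RelMap {n} r _ := r.elim

/-- Existential formulas: iterated existential quantifications of a
quantifier-free formula. -/
inductive IsExistentialQF {α : Type*} : ∀ {n : ℕ}, groupLang.BoundedFormula α n → Prop
  | of_isQF {n : ℕ} {φ : groupLang.BoundedFormula α n} (h : φ.IsQF) : IsExistentialQF φ
  | ex {n : ℕ} {φ : groupLang.BoundedFormula α (n + 1)} (h : IsExistentialQF φ) :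
      IsExistentialQF φ.ex

/-- Universal formulas: iterated universal quantifications of a
quantifier-free formula. -/
inductive IsUniversalQF {α : Type*} : ∀ {n : ℕ}, groupLang.BoundedFormula α n → Prop
  | of_isQF {n : ℕ} {φ : groupLang.BoundedFormula α n} (h : φ.IsQF) : IsUniversalQF φ
  | all {n : ℕ} {φ : groupLang.BoundedFormula α (n + 1)} (h : IsUniversalQF φ) :
      IsUniversalQF φ.all

/-- ∀∃-formulas: iterated universal quantifications of an existential formula. -/
inductive IsAE {α : Type*} : ∀ {n : ℕ}, groupLang.BoundedFormula α n → Prop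
  | of_existential {n : ℕ} {φ : groupLang.BoundedFormula α n} (h : IsExistentialQF φ) : IsAE φ
  | all {n : ℕ} {φ : groupLang.BoundedFormula α (n + 1)} (h : IsAE φ) : IsAE φ.all

/-- A group is virtually free if it has a free subgroup of finite index. -/
def VirtuallyFree (G : Type*) [Group G] : Prop :=
  ∃ H : Subgroup G, H.FiniteIndex ∧ Nonempty (IsFreeGroup H)

/-- A group is co-Hopfian if every injective endomorphism is surjective. -/
def CoHopfian (G : Type*) [Group G] : Prop :=
  ∀ φ : G →* G, Function.Injective φ → Function.Surjective φ

/-- Two homomorphisms `φ, φ' : G → G'` are equivalent if they coincide up to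
conjugation on every finite subgroup of `G`. -/
def HomEquiv {G G' : Type*} [Group G] [Group G'] (φ φ' : G →* G') : Prop :=
  ∀ H : Subgroup G, (H : Set G).Finite →
    ∃ g' : G', ∀ h ∈ H, φ' h = g' * φ h * g'⁻¹

/-- Two groups are ∀∃-equivalent if they satisfy the same ∀∃-sentences. -/
def AEEquivalent (G : Type*) (G' : Type*) [Group G] [Group G'] : Prop :=
  ∀ φ : groupLang.Sentence, IsAE φ → (G ⊨ φ ↔ G' ⊨ φ)

/-- Two groups are ∃-equivalent if they satisfy the same existential sentences. -/
def ExistentiallyEquivalent (G : Type*) (G' : Type*) [Group G] [Group G'] : Prop :=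
  ∀ φ : groupLang.Sentence, IsExistentialQF φ → (G ⊨ φ ↔ G' ⊨ φ)

/-- An endomorphism is rigid-testing: `G` is rigid if every endomorphism
equivalent to the identity is an automorphism. -/
def Rigid (G : Type*) [Group G] : Prop :=
  ∀ φ : G →* G, HomEquiv φ (MonoidHom.id G) → Function.Bijective φ

/-- `Out G` is finite, expressed as: the inner automorphisms form a finite index
subgroup of `Aut G`. -/
def OutFinite (G : Type*) [Group G] : Prop :=
  (MulAut.conj : G →* MulAut G).range.FiniteIndex

/-- Iterated composition of an endomorphism. -/
def homPow {G : Type*} [Group G] (φ : G →* G) : ℕ → (G →* G)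
  | 0 => MonoidHom.id G
  | n + 1 => φ.comp (homPow φ n)

/-- An endomorphism `φ` of `G` is class-permuting if some positive power of `φ`
is equivalent to the identity of `G`. -/
def ClassPermuting {G : Type*} [Group G] (φ : G →* G) : Prop :=
  ∃ n : ℕ, 1 ≤ n ∧ HomEquiv (homPow φ n) (MonoidHom.id G)

/-- A maximal finite subgroup: a finite subgroup maximal with respect to
inclusion among finite subgroups. -/
def MaximalFiniteSubgroup {G : Type*} [Group G] (A : Subgroup G) : Prop :=
  (A : Set G).Finite ∧ ∀ B : Subgroup G, (B : Set G).Finite → A ≤ B → A = B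

/-- Two subgroups are conjugate. -/
def SubgroupConj {G : Type*} [Group G] (A B : Subgroup G) : Prop :=
  ∃ g : G, B = A.map (MulAut.conj g).toMonoidHom

/-- A group is strongly co-Hopfian if there is a finite subset `F` of
`G \ {1}` such that every endomorphism whose kernel misses `F` is an
automorphism. -/
def StronglyCoHopfian (G : Type*) [Group G] : Prop :=
  ∃ F : Finset G, (1 : G) ∉ F ∧
    ∀ φ : G →* G, (∀ f ∈ F, φ f ≠ 1) → Function.Bijective φ

/-- A group is finitely presented. -/
def GroupFinitelyPresented (G : Type*) [Group G] : Prop :=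
  ∃ (n : ℕ) (rels : Finset (FreeGroup (Fin n))),
    Nonempty (PresentedGroup (rels : Set (FreeGroup (Fin n))) ≃* G)

open FreeGroup in
/-- A finitely generated group has a word length. -/
theorem vf_exists_length (G : Type*) [Group G] (hfg : Group.FG G) :
    ∃ (S : Set G) (l : G → ℕ), S.Finite ∧ l 1 = 0 ∧ (∀ g, l g⁻¹ = l g) ∧
      (∀ g h, l (g * h) ≤ l g + l h) ∧ (∀ R, {g | l g ≤ R}.Finite) ∧ (∀ s ∈ S, l s ≤ 1) ∧
      (∀ g, g ≠ 1 → ∃ s ∈ S, ∃ h, g = h * s ∧ l h + 1 ≤ l g) := by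
  classical
  obtain ⟨α, hα, f, hf⟩ := Group.fg_iff_exists_freeGroup_hom_surjective_finite.1 hfg
  have key : ∀ g, ∃ n, ∃ w : FreeGroup α, f w = g ∧ w.norm = n := fun g => by
    obtain ⟨w, hw⟩ := hf g
    exact ⟨_, w, hw, rfl⟩
  let l : G → ℕ := fun g => Nat.find (key g)
  have hl : ∀ g, ∃ w : FreeGroup α, f w = g ∧ w.norm = l g := fun g => Nat.find_spec (key g)
  have hle : ∀ w, l (f w) ≤ w.norm := fun w => Nat.find_min' (key (f w)) ⟨w, rfl, rfl⟩
  have hmul : ∀ g h, l (g * h) ≤ l g + l h := by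
    intro g h
    obtain ⟨w, rfl, hw⟩ := hl g
    obtain ⟨v, rfl, hv⟩ := hl h
    rw [← hw, ← hv, ← _root_.map_mul]
    exact (hle _).trans (norm_mul_le _ _)
  have hinv' : ∀ g, l g⁻¹ ≤ l g := by
    intro g
    obtain ⟨w, rfl, hw⟩ := hl g
    rw [← hw, ← _root_.map_inv, ← norm_inv_eq]
    exact hle _
  refine ⟨Set.range (fun a : α × Bool => f (mk [a])), l, Set.finite_range _, ?_, ?_, hmul, ?_, ?_, ?_⟩
  · simpa using hle 1
  · intro g
    exact le_antisymm (hinv' g) (by simpa using hinv' g⁻¹)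
  · intro R
    refine ((List.finite_length_le (α × Bool) R).image (fun w => f (mk w))).subset ?_
    intro g hg
    obtain ⟨w, rfl, hw⟩ := hl g
    refine ⟨w.toWord, ?_, by simp only [mk_toWord]⟩
    have : w.norm ≤ R := hw.le.trans hg
    exact this
  · rintro _ ⟨a, rfl⟩
    exact (hle _).trans norm_mk_le
  · intro g hg
    obtain ⟨w, rfl, hw⟩ := hl g
    have hne : w.toWord ≠ [] := by
      intro h
      rw [toWord_eq_nil_iff] at h
      exact hg (by simp [h])
    refine ⟨_, ⟨w.toWord.getLast hne, rfl⟩, f (mk w.toWord.dropLast), ?_, ?_⟩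
    · rw [← _root_.map_mul, mul_mk, List.dropLast_append_getLast, mk_toWord]
    · have h1 := (hle (mk w.toWord.dropLast)).trans norm_mk_le
      have h2 : 0 < w.toWord.length := List.length_pos_iff.2 hne
      rw [List.length_dropLast] at h1
      have h3 : w.toWord.length = l (f w) := hw
      omega

/-- Along a geodesic from `x ∉ Q` to `y ∈ Q` there is a step entering `Q`. -/
theorem vf_path {G : Type*} [Group G] {S : Set G} {l : G → ℕ} (h1 : l 1 = 0)
    (hmul : ∀ g h, l (g * h) ≤ l g + l h) (hS : ∀ s ∈ S, l s ≤ 1)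
    (hgeo : ∀ g, g ≠ 1 → ∃ s ∈ S, ∃ h, g = h * s ∧ l h + 1 ≤ l g) (Q : Set G) :
    ∀ (N : ℕ) (x y : G), l (y * x⁻¹) ≤ N → x ∉ Q → y ∈ Q →
      ∃ g, ∃ s ∈ S, g ∉ Q ∧ s * g ∈ Q ∧ l (g * x⁻¹) + l (y * g⁻¹) ≤ l (y * x⁻¹) := by
  intro N
  induction N with
  | zero =>
    intro x y hN hx hy
    by_cases h : y * x⁻¹ = 1
    · rw [mul_inv_eq_one] at h
      exact absurd (h ▸ hy) hx
    · obtain ⟨s, _, k, _, hk⟩ := hgeo _ h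
      omega
  | succ N ih =>
    intro x y hN hx hy
    by_cases h : y * x⁻¹ = 1
    · rw [mul_inv_eq_one] at h
      exact absurd (h ▸ hy) hx
    · obtain ⟨s, hs, k, hk, hlk⟩ := hgeo _ h
      by_cases hz : s * x ∈ Q
      · exact ⟨x, s, hs, hx, hz, by simp [h1]⟩
      · have hyk : y * (s * x)⁻¹ = k := by
          rw [mul_inv_rev, ← mul_assoc, hk]; group
        obtain ⟨g, t, ht, hg, htg, hlt⟩ := ih (s * x) y (by rw [hyk]; omega) hz hy
        refine ⟨g, t, ht, hg, htg, ?_⟩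
        rw [hyk] at hlt
        have := hmul (g * (s * x)⁻¹) s
        have h2 : g * (s * x)⁻¹ * s = g * x⁻¹ := by group
        rw [h2] at this
        have := hS s hs
        omega

open FreeGroup in
theorem vf_free_step {X : Type*} [DecidableEq X] (p : List (X × Bool)) (a : X × Bool)
    (f : FreeGroup X) (h1 : ¬ p <:+ f.toWord) (h2 : p <:+ (mk [a] * f).toWord) :
    mk [a] * f = mk p := by
  have h3 : (mk [a] * f).toWord = reduce (a :: f.toWord) := by
    conv_lhs => rw [← mk_toWord (x := f), mul_mk]
    rfl
  have hr : (mk [a] * f) = mk (reduce (a :: f.toWord)) := by rw [← h3, mk_toWord]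
  rw [h3] at h2
  rw [hr]
  rw [reduce.cons, reduce_toWord] at *
  rcases hw : f.toWord with _ | ⟨b, t⟩
  · rw [hw] at h1 h2
    simp only at h2 ⊢
    rcases List.suffix_cons_iff.1 h2 with h | h
    · rw [h]
    · exact absurd h h1
  · rw [hw] at h1 h2
    simp only at h2 ⊢
    split_ifs at h2 ⊢ with hc
    · exact absurd (h2.trans (List.suffix_cons _ _)) h1
    · rcases List.suffix_cons_iff.1 h2 with h | h
      · rw [h]
      · exact absurd h h1

open FreeGroup in
theorem vf_free_cross {X : Type*} [DecidableEq X] (p : List (X × Bool)) (f : FreeGroup X)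
    (h1 : ¬ p <:+ f.toWord) (w : List (X × Bool)) :
    p <:+ (mk w * f).toWord → ∃ w' : List (X × Bool), w'.length ≤ w.length ∧ f = mk w' * mk p := by
  induction w with
  | nil =>
    intro h2
    exact absurd (by simpa [← one_eq_mk] using h2) h1
  | cons a w ih =>
    intro h2
    by_cases h : p <:+ (mk w * f).toWord
    · obtain ⟨w', hw', hf⟩ := ih h
      exact ⟨w', hw'.trans (by simp), hf⟩
    · have e : mk (a :: w) = mk [a] * mk w := by simp [mul_mk]
      rw [e, mul_assoc] at h2
      have := vf_free_step p a _ h h2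
      refine ⟨invRev (a :: w), by simp, ?_⟩
      rw [← inv_mk, ← this, e]
      group

open FreeGroup in
/-- a finitely generated free group has finite rank -/
theorem vf_finite_rank (X : Type*) (h : Group.FG (FreeGroup X)) : Finite X := by
  classical
  obtain ⟨T, hT⟩ := h.out
  by_contra hX
  rw [not_finite_iff_infinite] at hX
  let Y : Finset X := T.biUnion fun w => (w.toWord.map Prod.fst).toFinset
  obtain ⟨x, hx⟩ := Infinite.exists_notMem_finset Y
  let f : FreeGroup X →* Multiplicative ℤ :=
    FreeGroup.lift fun y => if y = x then Multiplicative.ofAdd 1 else 1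
  have hf : ∀ w ∈ T, f w = 1 := by
    intro w hw
    rw [← mk_toWord (x := w), FreeGroup.lift_mk]
    apply List.prod_eq_one
    intro z hz
    obtain ⟨⟨a, b⟩, hab, rfl⟩ := List.mem_map.1 hz
    have : a ≠ x := by
      rintro rfl
      apply hx
      simp only [Y, Finset.mem_biUnion, List.mem_toFinset, List.mem_map]
      exact ⟨w, hw, _, hab, rfl⟩
    cases b <;> simp [this]
  have h2 : (⊤ : Subgroup (FreeGroup X)) ≤ f.ker := by
    rw [← hT, Subgroup.closure_le]
    exact fun w hw => hf w hw
  have h3 : f (of x) = 1 := h2 (Subgroup.mem_top _)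
  simp [f] at h3

theorem vf_list_switch {α : Type*} (a b : List α → ℕ) (h0 : a [] < b []) :
    ∀ w : List α, b w ≤ a w → ∃ x p, (x :: p) <:+ w ∧ a p < b p ∧ b (x :: p) ≤ a (x :: p)
  | [], h => by omega
  | x :: w, h => by
    by_cases hw : b w ≤ a w
    · obtain ⟨y, p, hs, h1, h2⟩ := vf_list_switch a b h0 w hw
      exact ⟨y, p, hs.trans (List.suffix_cons _ _), h1, h2⟩
    · exact ⟨x, w, List.suffix_rfl, by omega, h⟩

/-- In a finitely generated virtually free group there is a finite set which meets
every conjugacy class of finite subgroups (in the sense that it contains a conjugate). -/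
theorem vf_bounded (G : Type*) [Group G] (hfg : Group.FG G) (hvf : VirtuallyFree G) :
    ∃ B : Set G, B.Finite ∧ ∀ K : Subgroup G, (K : Set G).Finite →
      ∃ c : G, ∀ k ∈ K, c * k * c⁻¹ ∈ B := by
  classical
  obtain ⟨H, hH, ⟨hfree⟩⟩ := hvf
  obtain ⟨X, ⟨bas⟩⟩ := hfree.nonempty_basis
  have hHfg : Group.FG H := Subgroup.fg_of_index_ne_zero H
  have hX : Finite X := vf_finite_rank X (Group.fg_of_surjective (f := bas.repr.toMonoidHom)
    bas.repr.surjective)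
  obtain ⟨S, l, hSfin, hl1, hinv, hmul, hball, hS, hgeo⟩ := vf_exists_length G hfg
  let ε : FreeGroup X →* G := H.subtype.comp bas.repr.symm.toMonoidHom
  have hε : Function.Injective ε := H.subtype_injective.comp bas.repr.symm.injective
  have hπ : ∀ g : G, ∃ f : FreeGroup X, g = (QuotientGroup.mk g : G ⧸ H).out * ε f := by
    intro g
    have hm : ((QuotientGroup.mk g : G ⧸ H).out)⁻¹ * g ∈ H := by
      rw [← QuotientGroup.eq, QuotientGroup.out_eq']
    refine ⟨bas.repr ⟨_, hm⟩, ?_⟩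
    simp [ε]
  choose π hπ using hπ
  have hfinQ : Finite (G ⧸ H) := Subgroup.finite_quotient_of_finiteIndex
  let τ : G ⧸ H → G := Quotient.out
  obtain ⟨M1, hM1⟩ := (Set.finite_range (fun q : G ⧸ H => l (τ q))).bddAbove
  obtain ⟨M2, hM2⟩ := (Set.finite_range (fun a : X × Bool => l (ε (FreeGroup.mk [a])))).bddAbove
  obtain ⟨M, hMa, hMb⟩ : ∃ M, (∀ q, l (τ q) ≤ M) ∧ ∀ a : X × Bool, l (ε (FreeGroup.mk [a])) ≤ M :=
    ⟨max M1 M2, fun q => (hM1 ⟨q, rfl⟩).trans (le_max_left _ _),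
      fun a => (hM2 ⟨a, rfl⟩).trans (le_max_right _ _)⟩
  have hword : ∀ w : List (X × Bool), l (ε (FreeGroup.mk w)) ≤ w.length * M := by
    intro w
    induction w with
    | nil =>
      have : FreeGroup.mk ([] : List (X × Bool)) = 1 := rfl
      simp [this, hl1]
    | cons a w ih =>
      have e : FreeGroup.mk (a :: w) = FreeGroup.mk [a] * FreeGroup.mk w := by
        simp [FreeGroup.mul_mk]
      rw [e, map_mul, List.length_cons, add_mul, one_mul]
      have := hmul (ε (FreeGroup.mk [a])) (ε (FreeGroup.mk w))
      have := hMb a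
      omega
  -- steps in the free group are bounded
  obtain ⟨L, hL⟩ : ∃ L, ∀ s ∈ S, ∀ g, (π (s * g) * (π g)⁻¹).norm ≤ L := by
    have hfin : ((fun z : (G ⧸ H) × G × (G ⧸ H) => (τ z.1)⁻¹ * z.2.1 * τ z.2.2) ''
        (Set.univ ×ˢ S ×ˢ Set.univ)).Finite :=
      (Set.finite_univ.prod (hSfin.prod Set.finite_univ)).image _
    obtain ⟨L, hL⟩ := ((hfin.preimage (hε.injOn)).image FreeGroup.norm).bddAbove
    refine ⟨L, fun s hs g => hL ⟨_, ?_, rfl⟩⟩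
    refine ⟨((QuotientGroup.mk (s * g) : G ⧸ H), s, (QuotientGroup.mk g : G ⧸ H)),
      ⟨trivial, hs, trivial⟩, ?_⟩
    have e1 := hπ (s * g)
    have e2 := hπ g
    simp only [map_mul, map_inv]
    change (τ _)⁻¹ * s * τ _ = _
    have e3 : ε (π (s * g)) = (τ (QuotientGroup.mk (s * g)))⁻¹ * (s * g) :=
      eq_inv_mul_iff_mul_eq.2 e1.symm
    have e4 : ε (π g) = (τ (QuotientGroup.mk g))⁻¹ * g := eq_inv_mul_iff_mul_eq.2 e2.symm
    rw [e3, e4]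
    group
  have hτ : ∀ g, l (g * (ε (π g))⁻¹) ≤ M := by
    intro g
    have : g * (ε (π g))⁻¹ = τ (QuotientGroup.mk g) := mul_inv_eq_iff_eq_mul.2 (hπ g)
    rw [this]
    exact hMa _
  have tri : ∀ x y z : G, l (x * z⁻¹) ≤ l (x * y⁻¹) + l (y * z⁻¹) := by
    intro x y z
    have := hmul (x * y⁻¹) (y * z⁻¹)
    rwa [show x * y⁻¹ * (y * z⁻¹) = x * z⁻¹ by group] at this
  have sym : ∀ x y : G, l (x * y⁻¹) = l (y * x⁻¹) := by
    intro x y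
    rw [← hinv, mul_inv_rev, inv_inv]
  -- crossing
  have cross : ∀ (f : FreeGroup X) (p : List (X × Bool)) (x y : G),
      ¬ p <:+ (π x * f⁻¹).toWord → p <:+ (π y * f⁻¹).toWord →
      ∃ g, l (g * (ε (FreeGroup.mk p) * ε f)⁻¹) ≤ M + L * M ∧
        l (g * x⁻¹) + l (y * g⁻¹) ≤ l (y * x⁻¹) := by
    intro f p x y hx hy
    obtain ⟨g, s, hs, hg, hsg, hle⟩ := vf_path hl1 hmul hS hgeo
      {g | p <:+ (π g * f⁻¹).toWord} _ x y le_rfl hx hy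
    refine ⟨g, ?_, hle⟩
    simp only [Set.mem_ofPred_eq] at hg hsg
    have e : π (s * g) * f⁻¹ = FreeGroup.mk (π (s * g) * (π g)⁻¹).toWord * (π g * f⁻¹) := by
      rw [FreeGroup.mk_toWord]; group
    rw [e] at hsg
    obtain ⟨w', hw', he⟩ := vf_free_cross p _ hg _ hsg
    have h1 := hτ g
    have h2 := tri g (ε (π g)) (ε (FreeGroup.mk p) * ε f)
    have h3 : ε (π g) * (ε (FreeGroup.mk p) * ε f)⁻¹ = ε (FreeGroup.mk w') := by
      rw [← map_mul, ← map_inv, ← map_mul]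
      congr 1
      rw [mul_inv_rev, ← mul_assoc, he]
      group
    have h4 := hword w'
    have h5 : w'.length ≤ L := hw'.trans (hL s hs g)
    have h6 := Nat.mul_le_mul_right M h5
    rw [h3] at h2
    omega
  refine ⟨{g | l g ≤ 4 * (M + L * M) + 2 * M}, hball _, ?_⟩
  intro K hK
  let Kf := hK.toFinset
  have hKf : ∀ k, k ∈ Kf ↔ k ∈ K := fun k => by simp [Kf]
  let rad : G → ℕ := fun c => Kf.sup fun k => l (k * c⁻¹)
  let c : G := Function.argmin rad
  have hc : ∀ m, rad c ≤ rad m := fun m => Function.argmin_le rad m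
  have hrad : ∀ k ∈ K, l (k * c⁻¹) ≤ rad c := fun k hk =>
    Finset.le_sup (f := fun k => l (k * c⁻¹)) ((hKf k).2 hk)
  refine ⟨c, fun k0 hk0 => ?_⟩
  obtain ⟨c', hc'⟩ : ∃ c', c' = c * k0 := ⟨_, rfl⟩
  rw [← hc']
  have hrad' : ∀ k ∈ K, l (k * c'⁻¹) ≤ rad c := by
    intro k hk
    have := hrad (k * k0⁻¹) (K.mul_mem hk (K.inv_mem hk0))
    rwa [show k * k0⁻¹ * c⁻¹ = k * c'⁻¹ by rw [hc']; group] at this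
  change l (c' * c⁻¹) ≤ _
  obtain ⟨f, hf⟩ : ∃ f, f = π c := ⟨_, rfl⟩
  obtain ⟨w, hw⟩ : ∃ w, w = (π c' * f⁻¹).toWord := ⟨_, rfl⟩
  let m : List (X × Bool) → G := fun p => ε (FreeGroup.mk p) * ε f
  let a : List (X × Bool) → ℕ := fun p => l (m p * c⁻¹)
  let b : List (X × Bool) → ℕ := fun p => l (m p * c'⁻¹)
  have hab : ∀ p, l (c' * c⁻¹) ≤ a p + b p := by
    intro p
    have := tri c' (m p) c
    rw [sym c' (m p)] at this
    simp only [a, b]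
    omega
  have ha0 : a [] ≤ M := by
    have := hτ c
    rw [sym, ← hf] at this
    have e : m [] = ε f := by
      have : FreeGroup.mk ([] : List (X × Bool)) = 1 := rfl
      simp [m, this]
    simp only [a, e]
    exact this
  have hbw : b w ≤ M := by
    have := hτ c'
    rw [sym] at this
    have e : m w = ε (π c') := by
      simp only [m]
      rw [hw, FreeGroup.mk_toWord, ← map_mul]
      congr 1
      group
    simp only [b, e]
    exact this
  by_cases h0 : a [] < b []
  swap
  · have := hab []
    omega
  by_cases h1 : b w ≤ a w
  swap
  · have := hab w
    omega
  obtain ⟨x, p, hsuf, hlt, hge⟩ := vf_list_switch a b h0 w h1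
  have hbstep : b p ≤ b (x :: p) + M := by
    have h2 := tri (m p) (m (x :: p)) c'
    have h3 : m (x :: p) * (m p)⁻¹ = ε (FreeGroup.mk [x]) := by
      have e : FreeGroup.mk (x :: p) = FreeGroup.mk [x] * FreeGroup.mk p := by
        simp [FreeGroup.mul_mk]
      simp only [m]
      rw [e, map_mul]
      group
    rw [sym (m p) (m (x :: p)), h3] at h2
    have := hMb x
    simp only [b]
    omega
  have hD1 := hab p
  have hD2 := hab (x :: p)
  -- the new center
  have hcQ : ¬ (x :: p) <:+ (π c * f⁻¹).toWord := by
    rw [hf]; simp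
  have hmain : ∀ k ∈ K, 2 * l (k * (m (x :: p))⁻¹) + l (c' * c⁻¹) ≤
      2 * rad c + 4 * (M + L * M) + 2 * M := by
    intro k hk
    have hr := hrad k hk
    have hr' := hrad' k hk
    by_cases hkQ : (x :: p) <:+ (π k * f⁻¹).toWord
    · obtain ⟨g, hg1, hg2⟩ := cross f _ c k hcQ hkQ
      have t1 := tri k g (m (x :: p))
      have t2 := tri (m (x :: p)) g c
      rw [sym (m (x :: p)) g] at t2
      change l (g * (m (x :: p))⁻¹) ≤ _ at hg1
      simp only [a, b] at *
      omega
    · obtain ⟨g, hg1, hg2⟩ := cross f _ k c' hkQ (hw ▸ hsuf)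
      have t1 := tri k g (m (x :: p))
      have t2 := tri (m (x :: p)) g c'
      rw [sym (m (x :: p)) g] at t2
      rw [sym g k, sym c' g, sym c' k] at hg2
      change l (g * (m (x :: p))⁻¹) ≤ _ at hg1
      simp only [a, b] at *
      omega
  obtain ⟨k, hk, hkm⟩ := Finset.exists_mem_eq_sup Kf ⟨1, (hKf 1).2 K.one_mem⟩
    (fun k => l (k * (m (x :: p))⁻¹))
  have h5 := hmain k ((hKf k).1 hk)
  have h6 : rad c ≤ l (k * (m (x :: p))⁻¹) := by
    rw [← hkm]; exact hc _
  omega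

theorem vf_term {G : Type*} [Group G] {n : ℕ} (s : Fin n → G)
    (hs : Subgroup.closure (Set.range s) = ⊤) (g : G) :
    ∃ t : groupLang.Term (Fin n ⊕ Fin 1), ∀ (φ : G →* G) (xs : Fin 1 → G),
      t.realize (Sum.elim (fun i => φ (s i)) xs) = φ g := by
  have hg : g ∈ Subgroup.closure (Set.range s) := by rw [hs]; trivial
  induction hg using Subgroup.closure_induction with
  | mem x hx =>
    obtain ⟨i, rfl⟩ := hx
    exact ⟨.var (.inl i), fun φ xs => rfl⟩
  | one => exact ⟨.func GroupFunc.one ![], fun φ xs => (map_one φ).symm⟩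
  | mul x y _ _ hx hy =>
    obtain ⟨t, ht⟩ := hx
    obtain ⟨u, hu⟩ := hy
    refine ⟨.func GroupFunc.mul ![t, u], fun φ xs => ?_⟩
    rw [map_mul, ← ht φ xs, ← hu φ xs]
    rfl
  | inv x _ hx =>
    obtain ⟨t, ht⟩ := hx
    refine ⟨.func GroupFunc.inv ![t], fun φ xs => ?_⟩
    rw [map_inv, ← ht φ xs]
    rfl

theorem vf_conj {G : Type*} [Group G] {α β : Type*} {k : ℕ}
    (F : β → groupLang.BoundedFormula α k) (hF : ∀ b, (F b).IsQF) (P : Set β) (hP : P.Finite) :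
    ∃ χ : groupLang.BoundedFormula α k, χ.IsQF ∧ ∀ (v : α → G) (xs : Fin k → G),
      χ.Realize v xs ↔ ∀ b ∈ P, (F b).Realize v xs := by
  induction P, hP using Set.Finite.induction_on with
  | empty => exact ⟨⊤, .top, fun v xs => by simp⟩
  | @insert b P _ _ ih =>
    obtain ⟨χ, h1, h2⟩ := ih
    exact ⟨F b ⊓ χ, (hF b).inf h1, fun v xs => by simp [h2]⟩

/-- The formula saying that no two of finitely many given pairs of tuples become conjugate. -/
theorem vf_formula {G : Type*} [Group G] {n : ℕ} (s : Fin n → G)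
    (hs : Subgroup.closure (Set.range s) = ⊤) {ι : Type*} [Finite ι]
    (P : Set ((ι → G) × (ι → G))) (hP : P.Finite) :
    ∃ θ : groupLang.Formula (Fin n), IsUniversalQF θ ∧ ∀ φ : G →* G,
      (θ.Realize (fun i => φ (s i)) ↔
        ∀ y : G, ∀ z ∈ P, ¬ ∀ i, y * φ (z.1 i) * y⁻¹ = φ (z.2 i)) := by
  choose T hT using vf_term s hs
  let Y : groupLang.Term (Fin n ⊕ Fin 1) := .var (.inr 0)
  let E : ((ι → G) × (ι → G)) → ι → groupLang.BoundedFormula (Fin n) 1 := fun z i =>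
    Term.bdEqual (.func GroupFunc.mul ![.func GroupFunc.mul ![Y, T (z.1 i)],
      .func GroupFunc.inv ![Y] ]) (T (z.2 i))
  have hE : ∀ z i, (E z i).IsQF := fun z i => .of_isAtomic (.equal _ _)
  choose C hC1 hC2 using fun z => vf_conj (G := G) (E z) (hE z) Set.univ Set.finite_univ
  obtain ⟨χ, hχ1, hχ2⟩ := vf_conj (G := G) (fun z => (C z).not) (fun z => (hC1 z).not) P hP
  refine ⟨χ.all, .all (.of_isQF hχ1), fun φ => ?_⟩
  change (∀ y : G, χ.Realize _ (Fin.snoc default y)) ↔ _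
  refine forall_congr' fun y => ?_
  rw [hχ2]
  refine forall_congr' fun z => forall_congr' fun _ => ?_
  rw [BoundedFormula.realize_not, hC2]
  refine not_congr ?_
  simp only [Set.mem_univ, true_imp_iff]
  refine forall_congr' fun i => ?_
  simp only [E]
  rw [BoundedFormula.realize_bdEqual, hT]
  change y * (T (z.1 i)).realize _ * y⁻¹ = _ ↔ _
  rw [hT]

theorem vf_homPow_apply {G : Type*} [Group G] (φ : G →* G) (k : ℕ) (g : G) :
    homPow φ k g = φ^[k] g := by
  induction k with
  | zero => rfl
  | succ k ih =>
    rw [Function.iterate_succ_apply', ← ih]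
    rfl

/-- Tuples with entries in a common finite subgroup. -/
def VfTuple (G : Type*) [Group G] (ι : Type*) : Type _ :=
  {t : ι → G // ∃ K : Subgroup G, (K : Set G).Finite ∧ ∀ i, t i ∈ K}

/-- Conjugacy of tuples. -/
def vfSetoid (G : Type*) [Group G] (ι : Type*) : Setoid (VfTuple G ι) where
  r t u := ∃ g : G, ∀ i, g * t.1 i * g⁻¹ = u.1 i
  iseqv :=
    { refl := fun t => ⟨1, by simp⟩
      symm := fun {t u} ⟨g, hg⟩ => ⟨g⁻¹, fun i => by rw [← hg]; group⟩
      trans := fun {t u v} ⟨g, hg⟩ ⟨h, hh⟩ => ⟨h * g, fun i => by rw [← hh, ← hg]; group⟩ }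

/-- The action of an endomorphism on tuples. -/
def VfTuple.map {G : Type*} [Group G] {ι : Type*} (φ : G →* G) (t : VfTuple G ι) : VfTuple G ι :=
  ⟨fun i => φ (t.1 i), by
    obtain ⟨K, hK, h⟩ := t.2
    exact ⟨K.map φ, by rw [Subgroup.coe_map]; exact hK.image _,
      fun i => Subgroup.mem_map_of_mem _ (h i)⟩⟩

theorem VfTuple.map_iterate {G : Type*} [Group G] {ι : Type*} (φ : G →* G) (k : ℕ)
    (t : VfTuple G ι) (i : ι) : ((VfTuple.map φ)^[k] t).1 i = φ^[k] (t.1 i) := by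
  induction k with
  | zero => rfl
  | succ k ih =>
    rw [Function.iterate_succ_apply', Function.iterate_succ_apply', ← ih]
    rfl

theorem VfTuple.map_rel {G : Type*} [Group G] {ι : Type*} (φ : G →* G) {t u : VfTuple G ι}
    (h : vfSetoid G ι t u) : vfSetoid G ι (t.map φ) (u.map φ) := by
  obtain ⟨g, hg⟩ := h
  refine ⟨φ g, fun i => ?_⟩
  simp only [VfTuple.map]
  rw [← hg]
  simp

/-- There is a universal formula in `n` variables expressing that an endomorphism
of `G` is class-permuting, in terms of the images of a fixed generating tuple. -/
theorem exists_universal_formula_classPermuting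
    (G : Type*) [Group G] (hfg : Group.FG G) (hvf : VirtuallyFree G)
    (n : ℕ) (s : Fin n → G) (hs : Subgroup.closure (Set.range s) = ⊤) :
    ∃ θ : groupLang.Formula (Fin n), IsUniversalQF θ ∧
      ∀ φ : G →* G, (θ.Realize (fun i => φ (s i)) ↔ ClassPermuting φ) := by
  classical
  obtain ⟨B, hB, hconj⟩ := vf_bounded G hfg hvf
  have hBfin : Finite B := hB
  let V : Set (B → G) := {t | (∃ K : Subgroup G, (K : Set G).Finite ∧ ∀ i, t i ∈ K) ∧ ∀ i, t i ∈ B}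
  have hV : V.Finite := (Set.Finite.pi' (fun _ : B => hB)).subset fun t ht => ht.2
  obtain ⟨θ, hθ, hreal⟩ := vf_formula s hs
    {z : (B → G) × (B → G) | (z.1 ∈ V ∧ z.2 ∈ V) ∧ ¬ ∃ g : G, ∀ i, g * z.1 i * g⁻¹ = z.2 i}
    ((hV.prod hV).subset fun z hz => hz.1)
  refine ⟨θ, hθ, fun φ => ?_⟩
  rw [hreal]
  -- every tuple is conjugate to one in `V`
  have hrep : ∀ t : VfTuple G B, ∃ u : VfTuple G B, u.1 ∈ V ∧ vfSetoid G B t u := by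
    rintro ⟨t, K, hK, ht⟩
    obtain ⟨c, hc⟩ := hconj K hK
    have hu : ∃ K' : Subgroup G, (K' : Set G).Finite ∧ ∀ i, c * t i * c⁻¹ ∈ K' :=
      ⟨K.map (MulAut.conj c).toMonoidHom, by rw [Subgroup.coe_map]; exact hK.image _,
        fun i => ⟨t i, ht i, rfl⟩⟩
    exact ⟨⟨fun i => c * t i * c⁻¹, hu⟩, ⟨hu, fun i => hc _ (ht i)⟩, c, fun i => rfl⟩
  let Q := Quotient (vfSetoid G B)
  have hQ : Finite Q := by
    have : Finite V := hV
    refine Finite.of_surjective (fun v : V => (Quotient.mk (vfSetoid G B) ⟨v.1, v.2.1⟩ : Q)) ?_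
    intro q
    induction q using Quotient.inductionOn with
    | h t =>
      obtain ⟨u, hu, htu⟩ := hrep t
      exact ⟨⟨u.1, hu⟩, Quotient.sound ((vfSetoid G B).symm htu)⟩
  let Φ : Q → Q := Quotient.map (VfTuple.map φ) fun t u h => VfTuple.map_rel φ h
  constructor
  · intro h
    have hinj : Function.Injective Φ := by
      intro q r
      induction q using Quotient.inductionOn with
      | h t =>
      induction r using Quotient.inductionOn with
      | h u =>
      intro hqr
      obtain ⟨t', ht', htt'⟩ := hrep t
      obtain ⟨u', hu', huu'⟩ := hrep u
      have e1 : (Quotient.mk (vfSetoid G B) t) = Quotient.mk _ t' := Quotient.sound htt'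
      have e2 : (Quotient.mk (vfSetoid G B) u) = Quotient.mk _ u' := Quotient.sound huu'
      rw [e1, e2] at hqr ⊢
      obtain ⟨y, hy⟩ : vfSetoid G B (t'.map φ) (u'.map φ) := Quotient.exact hqr
      apply Quotient.sound
      by_contra hne
      exact h y (t'.1, u'.1) ⟨⟨ht', hu'⟩, hne⟩ hy
    let e : Equiv.Perm Q := Equiv.ofBijective Φ (Finite.injective_iff_bijective.1 hinj)
    have hpos : 0 < orderOf e := (isOfFinOrder_of_finite e).orderOf_pos
    refine ⟨orderOf e, hpos, fun K hK => ?_⟩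
    have hid : ∀ q, Φ^[orderOf e] q = q := by
      intro q
      have := congrArg (fun σ : Equiv.Perm Q => σ q) (pow_orderOf_eq_one e)
      simp only [Equiv.Perm.coe_pow, Equiv.Perm.coe_one, id] at this
      exact this
    have hit : ∀ (k : ℕ) (t : VfTuple G B),
        Φ^[k] (Quotient.mk _ t) = Quotient.mk _ ((VfTuple.map φ)^[k] t) := by
      intro k t
      induction k with
      | zero => rfl
      | succ k ih =>
        rw [Function.iterate_succ_apply', Function.iterate_succ_apply', ih]
        rfl
    obtain ⟨c, hc⟩ := hconj K hK
    let t : VfTuple G B := ⟨fun b => if c⁻¹ * b.1 * c ∈ K then c⁻¹ * b.1 * c else 1, K, hK, by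
      intro i
      simp only
      split_ifs with h
      · exact h
      · exact K.one_mem⟩
    have h1 := hid (Quotient.mk _ t)
    rw [hit] at h1
    obtain ⟨g, hg⟩ := Quotient.exact h1
    refine ⟨g, fun k hk => ?_⟩
    have h2 := hg ⟨_, hc k hk⟩
    have h3 : t.1 ⟨_, hc k hk⟩ = k := by
      have : c⁻¹ * (c * k * c⁻¹) * c = k := by group
      simp only [t, this, if_pos hk]
    rw [VfTuple.map_iterate, h3, ← vf_homPow_apply] at h2
    exact h2.symm
  · rintro ⟨N, hN, hequiv⟩ y z ⟨⟨hz1, hz2⟩, hne⟩ hy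
    apply hne
    obtain ⟨N, rfl⟩ : ∃ m, N = m + 1 := ⟨N - 1, by omega⟩
    obtain ⟨K1, hK1, h1⟩ := hz1.1
    obtain ⟨K2, hK2, h2⟩ := hz2.1
    obtain ⟨g1, hg1⟩ := hequiv K1 hK1
    obtain ⟨g2, hg2⟩ := hequiv K2 hK2
    have hcomp : ∀ g, homPow φ (N + 1) g = homPow φ N (φ g) := fun g => by
      rw [vf_homPow_apply, vf_homPow_apply, Function.iterate_succ_apply]
    refine ⟨g2 * homPow φ N y * g1⁻¹, fun i => ?_⟩
    have e1 := hg1 _ (h1 i)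
    have e2 := hg2 _ (h2 i)
    rw [hcomp] at e1 e2
    rw [← hy i, map_mul, map_mul, map_inv] at e2
    simp only [MonoidHom.id_apply] at e1 e2
    rw [e2]
    generalize homPow φ N (φ (z.1 i)) = v at e1
    rw [e1]
    group
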